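/- arXiv:2204.06686 — 2 statements merged into one kernel-verified Lean document; each statement's English description precedes it below -/
import Mathlib

section
/- There exists an absolute constant c > 0 such that for every n ∈ ℕ, every f : {0,1}^n → {0,1} with var(f) > 0, and every 2-coloring col of the edges of the hypercube into red and blue, Talagrand_col(f) ≥ c·var(f)·√(log(1/var(f))). -/
open Finset

noncomputable section

/-- Expectation over the uniform distribution on `{0,1}^n`. -/
def hcExp (n : ℕ) (g : (Fin n → Bool) → ℝ) : ℝ :=
  (∑ x : Fin n → Bool, g x) / 2 ^ n

/-- Flip the `i`-th coordinate of `x`. -/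
def hcFlip {n : ℕ} (x : Fin n → Bool) (i : Fin n) : Fin n → Bool :=
  Function.update x i (!(x i))

/-- Sensitivity of `f` at `x`. -/
def sens {n : ℕ} (f : (Fin n → Bool) → Bool) (x : Fin n → Bool) : ℕ :=
  (Finset.univ.filter fun i => f (hcFlip x i) ≠ f x).card

/-- `f` with values in `{0,1} ⊆ ℝ`. -/
def toReal {n : ℕ} (f : (Fin n → Bool) → Bool) : (Fin n → Bool) → ℝ :=
  fun x => if f x then 1 else 0

/-- Variance of a Boolean function. -/
def hcVar (n : ℕ) (f : (Fin n → Bool) → Bool) : ℝ :=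
  hcExp n (toReal f) - (hcExp n (toReal f)) ^ 2

/-- Influence of coordinate `i`. -/
def influence (n : ℕ) (f : (Fin n → Bool) → Bool) (i : Fin n) : ℝ :=
  hcExp n (fun x => if f (hcFlip x i) = f x then 0 else 1)

/-- Fourier character. -/
def chi {n : ℕ} (S : Finset (Fin n)) (x : Fin n → Bool) : ℝ :=
  ∏ i ∈ S, (if x i then (-1 : ℝ) else 1)

/-- Fourier coefficient of `g` at `S`. -/
def fcoef (n : ℕ) (g : (Fin n → Bool) → ℝ) (S : Finset (Fin n)) : ℝ :=
  hcExp n (fun x => g x * chi S x)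

/-- Derivative of `g` along coordinate `i`. -/
def derivOn {n : ℕ} (g : (Fin n → Bool) → ℝ) (i : Fin n) (x : Fin n → Bool) : ℝ :=
  g (Function.update x i false) - g (Function.update x i true)

/-- Euclidean norm of the gradient of `g` at `x`. -/
def gradNorm2 {n : ℕ} (g : (Fin n → Bool) → ℝ) (x : Fin n → Bool) : ℝ :=
  Real.sqrt (∑ i, (derivOn g i x) ^ 2)

/-- `ℓ_p` norm of the gradient of `g` at `x`. -/
def gradNormP {n : ℕ} (p : ℝ) (g : (Fin n → Bool) → ℝ) (x : Fin n → Bool) : ℝ :=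
  (∑ i, |derivOn g i x| ^ p) ^ (1 / p)

/-- Fourier weight at exactly level `d`. -/
def wEq (n : ℕ) (g : (Fin n → Bool) → ℝ) (d : ℕ) : ℝ :=
  ∑ S ∈ Finset.univ.filter (fun S : Finset (Fin n) => S.card = d), (fcoef n g S) ^ 2

/-- Approximate level-`d` Fourier weight: levels in `[d, 2d)`. -/
def wApprox (n : ℕ) (g : (Fin n → Bool) → ℝ) (d : ℕ) : ℝ :=
  ∑ S ∈ Finset.univ.filter (fun S : Finset (Fin n) => d ≤ S.card ∧ S.card < 2 * d),
    (fcoef n g S) ^ 2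

/-- Fourier weight at levels `≥ d`. -/
def wGe (n : ℕ) (g : (Fin n → Bool) → ℝ) (d : ℕ) : ℝ :=
  ∑ S ∈ Finset.univ.filter (fun S : Finset (Fin n) => d ≤ S.card), (fcoef n g S) ^ 2


/-- Number of red sensitive edges at `x` counted when `f x = 1` (red sensitivity).
Here a coloring `col : (Fin n → Bool) → Fin n → Bool` gives the color (`true` = red,
`false` = blue) of the edge `(x, x ⊕ eᵢ)`. -/
def sRed {n : ℕ} (f : (Fin n → Bool) → Bool) (col : (Fin n → Bool) → Fin n → Bool)
    (x : Fin n → Bool) : ℕ :=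
  if f x then
    (Finset.univ.filter fun i => f (hcFlip x i) ≠ f x ∧ col x i = true).card
  else 0

/-- Blue sensitivity: counted when `f x = 0`. -/
def sBlue {n : ℕ} (f : (Fin n → Bool) → Bool) (col : (Fin n → Bool) → Fin n → Bool)
    (x : Fin n → Bool) : ℕ :=
  if f x then 0
  else (Finset.univ.filter fun i => f (hcFlip x i) ≠ f x ∧ col x i = false).card

/-- The Talagrand boundary with respect to the coloring `col`. -/
def talagrandCol {n : ℕ} (f : (Fin n → Bool) → Bool)
    (col : (Fin n → Bool) → Fin n → Bool) : ℝ :=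
  hcExp n (fun x => Real.sqrt (sRed f col x)) + hcExp n (fun x => Real.sqrt (sBlue f col x))

/-- The coloring is symmetric: the two endpoints of an edge see the same color. -/
def colSymm {n : ℕ} (col : (Fin n → Bool) → Fin n → Bool) : Prop :=
  ∀ (x : Fin n → Bool) (i : Fin n), col (hcFlip x i) i = col x i


/-! ### Signs and flips -/

def sg (b : Bool) : ℝ := if b then -1 else 1

theorem sg_mul_self (b : Bool) : sg b * sg b = 1 := by cases b <;> simp [sg]
theorem sg_not (b : Bool) : sg (!b) = - sg b := by cases b <;> simp [sg]

theorem hcFlip_flip {n : ℕ} (x : Fin n → Bool) (i : Fin n) : hcFlip (hcFlip x i) i = x := by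
  funext j
  by_cases h : j = i
  · subst h; simp [hcFlip]
  · simp [hcFlip, h]

theorem hcFlip_same {n : ℕ} (x : Fin n → Bool) (i : Fin n) : hcFlip x i i = !(x i) := by
  simp [hcFlip]

theorem hcFlip_ne {n : ℕ} (x : Fin n → Bool) {i j : Fin n} (h : j ≠ i) :
    hcFlip x i j = x j := by
  simp [hcFlip, h]

theorem sum_flip {n : ℕ} (i : Fin n) (F : (Fin n → Bool) → ℝ) :
    ∑ y, F (hcFlip y i) = ∑ y, F y :=
  Equiv.sum_comp
    (Function.Involutive.toPerm (fun y => hcFlip y i) (fun y => hcFlip_flip y i)) F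

theorem sum_eq_zero_of_flip {n : ℕ} (i : Fin n) (F : (Fin n → Bool) → ℝ)
    (h : ∀ y, F (hcFlip y i) = - F y) : ∑ y, F y = 0 := by
  have := sum_flip i F
  simp only [h, Finset.sum_neg_distrib] at this
  linarith

/-! ### Kernels -/

def tt {n : ℕ} (x y : Fin n → Bool) (i : Fin n) : ℝ := sg (x i) * sg (y i)

theorem tt_sq {n : ℕ} (x y : Fin n → Bool) (i : Fin n) : tt x y i * tt x y i = 1 := by
  have h1 := sg_mul_self (x i)
  have h2 := sg_mul_self (y i)
  unfold tt
  linear_combination (sg (y i) * sg (y i)) * h1 + h2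

theorem tt_cases {n : ℕ} (x y : Fin n → Bool) (i : Fin n) : tt x y i = 1 ∨ tt x y i = -1 := by
  unfold tt sg
  cases x i <;> cases y i <;> simp

theorem tt_flip {n : ℕ} (x y : Fin n → Bool) (i : Fin n) : tt x (hcFlip y i) i = - tt x y i := by
  simp [tt, hcFlip_same, sg_not]

theorem tt_flip_ne {n : ℕ} (x y : Fin n → Bool) {i j : Fin n} (h : j ≠ i) :
    tt x (hcFlip y i) j = tt x y j := by
  simp [tt, hcFlip_ne _ h]

theorem tt_flip_ne' {n : ℕ} (x y : Fin n → Bool) {i j : Fin n} (h : j ≠ i) :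
    tt (hcFlip x i) y j = tt x y j := by
  simp [tt, hcFlip_ne _ h]

def Ker {n : ℕ} (ρ : ℝ) (x y : Fin n → Bool) : ℝ := ∏ i, (1 + ρ * tt x y i)

def KerE {n : ℕ} (ρ : ℝ) (i : Fin n) (x y : Fin n → Bool) : ℝ :=
  ∏ j ∈ Finset.univ.erase i, (1 + ρ * tt x y j)

theorem Ker_eq {n : ℕ} (ρ : ℝ) (i : Fin n) (x y : Fin n → Bool) :
    Ker ρ x y = (1 + ρ * tt x y i) * KerE ρ i x y := by
  unfold Ker KerE
  rw [Finset.mul_prod_erase _ (fun j => 1 + ρ * tt x y j) (Finset.mem_univ i)]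

theorem Ker_mul {n : ℕ} (ρ : ℝ) (i : Fin n) (x y : Fin n → Bool) :
    Ker ρ x y * (tt x y i - ρ) = (1 - ρ ^ 2) * (tt x y i * KerE ρ i x y) := by
  rw [Ker_eq ρ i]
  linear_combination (ρ * KerE ρ i x y) * tt_sq x y i

theorem Ker_nonneg {n : ℕ} {ρ : ℝ} (h0 : 0 ≤ ρ) (h1 : ρ ≤ 1) (x y : Fin n → Bool) :
    0 ≤ Ker ρ x y := by
  unfold Ker
  apply Finset.prod_nonneg
  intro i _
  rcases tt_cases x y i with h | h <;> rw [h] <;> linarith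

theorem KerE_flip {n : ℕ} (ρ : ℝ) (i : Fin n) (x y : Fin n → Bool) :
    KerE ρ i x (hcFlip y i) = KerE ρ i x y := by
  unfold KerE
  apply Finset.prod_congr rfl
  intro j hj
  rw [tt_flip_ne _ _ (Finset.ne_of_mem_erase hj)]

theorem KerE_flip' {n : ℕ} (ρ : ℝ) (i : Fin n) (x y : Fin n → Bool) :
    KerE ρ i (hcFlip x i) y = KerE ρ i x y := by
  unfold KerE
  apply Finset.prod_congr rfl
  intro j hj
  rw [tt_flip_ne' _ _ (Finset.ne_of_mem_erase hj)]

theorem sum_Ker {n : ℕ} (ρ : ℝ) (x : Fin n → Bool) : ∑ y, Ker ρ x y = 2 ^ n := by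
  have h := Finset.prod_univ_sum (fun _ : Fin n => (Finset.univ : Finset Bool))
    (fun i b => 1 + ρ * (sg (x i) * sg b))
  rw [Fintype.piFinset_univ] at h
  unfold Ker tt
  rw [← h]
  have : ∀ i : Fin n, ∑ b : Bool, (1 + ρ * (sg (x i) * sg b)) = 2 := by
    intro i
    simp [sg]; ring
  rw [Finset.prod_congr rfl (fun i _ => this i)]
  simp

theorem sum_Ker_mul {n : ℕ} (ρ : ℝ) (x : Fin n → Bool) (i : Fin n) :
    ∑ y, Ker ρ x y * (tt x y i - ρ) = 0 := by
  apply sum_eq_zero_of_flip i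
  intro y
  rw [Ker_mul, Ker_mul, KerE_flip, tt_flip]; ring

theorem sum_Ker_mul_ne {n : ℕ} (ρ : ℝ) (x : Fin n → Bool) {i j : Fin n} (h : j ≠ i) :
    ∑ y, Ker ρ x y * ((tt x y i - ρ) * (tt x y j - ρ)) = 0 := by
  apply sum_eq_zero_of_flip i
  intro y
  rw [← mul_assoc, ← mul_assoc, Ker_mul, Ker_mul, KerE_flip, tt_flip, tt_flip_ne _ _ h]; ring

theorem sum_Ker_mul_eq {n : ℕ} (ρ : ℝ) (x : Fin n → Bool) (i : Fin n) :
    ∑ y, Ker ρ x y * ((tt x y i - ρ) * (tt x y i - ρ)) = (1 - ρ ^ 2) * 2 ^ n := by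
  have h : ∀ y, Ker ρ x y * ((tt x y i - ρ) * (tt x y i - ρ)) =
      (1 - ρ ^ 2) * Ker ρ x y - 2 * ρ * (Ker ρ x y * (tt x y i - ρ)) := by
    intro y
    linear_combination Ker ρ x y * tt_sq x y i
  simp only [h]
  rw [Finset.sum_sub_distrib, ← Finset.mul_sum, ← Finset.mul_sum, sum_Ker, sum_Ker_mul]
  ring

theorem sum_Ker_quad {n : ℕ} (ρ : ℝ) (x : Fin n → Bool) (u : Fin n → ℝ) :
    ∑ y, Ker ρ x y * (∑ i, u i * (tt x y i - ρ)) ^ 2 = (1 - ρ ^ 2) * 2 ^ n * ∑ i, u i ^ 2 := by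
  have h : ∀ y, Ker ρ x y * (∑ i, u i * (tt x y i - ρ)) ^ 2 =
      ∑ i, ∑ j, u i * u j * (Ker ρ x y * ((tt x y i - ρ) * (tt x y j - ρ))) := by
    intro y
    rw [pow_two, Finset.sum_mul_sum, Finset.mul_sum]
    refine Finset.sum_congr rfl fun i _ => ?_
    rw [Finset.mul_sum]
    refine Finset.sum_congr rfl fun j _ => ?_
    ring
  simp only [h]
  rw [Finset.sum_comm, Finset.mul_sum]
  refine Finset.sum_congr rfl fun i _ => ?_
  rw [Finset.sum_comm, Finset.sum_eq_single i]
  · rw [← Finset.mul_sum, sum_Ker_mul_eq]; ring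
  · intro j _ hj
    rw [← Finset.mul_sum, sum_Ker_mul_ne _ _ hj, mul_zero]
  · simp

/-! ### Gradient of noise -/

def GG {n : ℕ} (ρ : ℝ) (f : (Fin n → Bool) → ℝ) (i : Fin n) (x : Fin n → Bool) : ℝ :=
  (∑ y, f y * (sg (y i) * KerE ρ i x y)) / 2 ^ n

theorem GG_flip {n : ℕ} (ρ : ℝ) (f : (Fin n → Bool) → ℝ) (i : Fin n) (x : Fin n → Bool) :
    GG ρ f i (hcFlip x i) = GG ρ f i x := by
  simp only [GG, KerE_flip']

theorem GG_bound {n : ℕ} {ρ : ℝ} (h0 : 0 ≤ ρ) (h1 : ρ < 1) (f : (Fin n → Bool) → ℝ)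
    (hf : ∀ x, f x ^ 2 ≤ 1) (x : Fin n → Bool) :
    (1 - ρ ^ 2) * ∑ i, GG ρ f i x ^ 2 ≤ 1 := by
  set u : Fin n → ℝ := fun i => sg (x i) * GG ρ f i x with hu
  have hu2 : ∑ i, GG ρ f i x ^ 2 = ∑ i, u i ^ 2 := by
    refine Finset.sum_congr rfl fun i _ => ?_
    simp only [hu]
    linear_combination (- GG ρ f i x ^ 2) * sg_mul_self (x i)
  have hui : ∀ i, (1 - ρ ^ 2) * 2 ^ n * u i = ∑ y, f y * (Ker ρ x y * (tt x y i - ρ)) := by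
    intro i
    simp only [Ker_mul, hu, GG]
    have h2 : (2:ℝ) ^ n ≠ 0 := by positivity
    have : (1 - ρ ^ 2) * 2 ^ n * (sg (x i) * ((∑ y, f y * (sg (y i) * KerE ρ i x y)) / 2 ^ n))
      = (1 - ρ ^ 2) * sg (x i) * (∑ y, f y * (sg (y i) * KerE ρ i x y)) := by
      field_simp
    rw [this, Finset.mul_sum]
    refine Finset.sum_congr rfl fun y _ => ?_
    unfold tt; ring
  have key : (1 - ρ ^ 2) * 2 ^ n * ∑ i, u i ^ 2 =
      ∑ y, Ker ρ x y * (f y * ∑ i, u i * (tt x y i - ρ)) := by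
    calc (1 - ρ ^ 2) * 2 ^ n * ∑ i, u i ^ 2 = ∑ i, u i * ((1 - ρ ^ 2) * 2 ^ n * u i) := by
          rw [Finset.mul_sum]; refine Finset.sum_congr rfl fun i _ => ?_; ring
      _ = ∑ i, ∑ y, u i * (f y * (Ker ρ x y * (tt x y i - ρ))) := by
          refine Finset.sum_congr rfl fun i _ => ?_
          rw [hui, Finset.mul_sum]
      _ = _ := by
          rw [Finset.sum_comm]
          refine Finset.sum_congr rfl fun y _ => ?_
          rw [Finset.mul_sum, Finset.mul_sum]
          refine Finset.sum_congr rfl fun i _ => ?_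
          ring
  have le : ∑ y, Ker ρ x y * (f y * ∑ i, u i * (tt x y i - ρ)) ≤
      ∑ y, (Ker ρ x y / 2 + Ker ρ x y * (∑ i, u i * (tt x y i - ρ)) ^ 2 / 2) := by
    refine Finset.sum_le_sum fun y _ => ?_
    have hK := Ker_nonneg h0 h1.le x y
    set P := ∑ i, u i * (tt x y i - ρ)
    have : f y * P ≤ 1 / 2 + P ^ 2 / 2 := by nlinarith [sq_nonneg (f y - P), hf y]
    calc _ ≤ Ker ρ x y * (1 / 2 + P ^ 2 / 2) := by gcongr
      _ = _ := by ring
  rw [Finset.sum_add_distrib, ← Finset.sum_div, ← Finset.sum_div, sum_Ker, sum_Ker_quad, ← key] at le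
  rw [hu2]
  have h2 : (0:ℝ) < 2 ^ n := by positivity
  by_contra hcon
  push Not at hcon
  have := mul_lt_mul_of_pos_left hcon h2
  nlinarith

/-! ### Noise stability -/

def BB (n : ℕ) (ρ : ℝ) (f g : (Fin n → Bool) → ℝ) : ℝ :=
  (∑ x, ∑ y, f x * g y * Ker ρ x y) / 4 ^ n

theorem sum_cons {n : ℕ} (F : (Fin (n + 1) → Bool) → ℝ) :
    ∑ x, F x = ∑ x : Fin n → Bool, F (Fin.cons false x) + ∑ x : Fin n → Bool, F (Fin.cons true x) := by
  rw [← Equiv.sum_comp (Fin.consEquiv (fun _ => Bool)) F, Fintype.sum_prod_type]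
  simp only [Fintype.sum_bool]
  rw [add_comm]
  rfl

theorem hcExp_cons {n : ℕ} (f : (Fin (n + 1) → Bool) → ℝ) :
    hcExp (n + 1) f = (hcExp n (fun x => f (Fin.cons false x)) +
      hcExp n (fun x => f (Fin.cons true x))) / 2 := by
  unfold hcExp
  rw [sum_cons, pow_succ]
  field_simp

theorem Ker_cons {n : ℕ} (ρ : ℝ) (b c : Bool) (x y : Fin n → Bool) :
    Ker ρ (Fin.cons b x : Fin (n + 1) → Bool) (Fin.cons c y : Fin (n + 1) → Bool) =
      (1 + ρ * (sg b * sg c)) * Ker ρ x y := by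
  simp [Ker, Fin.prod_univ_succ, tt]

theorem BB_cons {n : ℕ} (ρ : ℝ) (f g : (Fin (n + 1) → Bool) → ℝ) :
    BB (n + 1) ρ f g =
      ((1 + ρ) * (BB n ρ (fun x => f (Fin.cons false x)) (fun x => g (Fin.cons false x)) +
        BB n ρ (fun x => f (Fin.cons true x)) (fun x => g (Fin.cons true x))) +
      (1 - ρ) * (BB n ρ (fun x => f (Fin.cons false x)) (fun x => g (Fin.cons true x)) +
        BB n ρ (fun x => f (Fin.cons true x)) (fun x => g (Fin.cons false x)))) / 4 := by
  have e : ∀ b c : Bool, ∑ x : Fin n → Bool, ∑ y : Fin n → Bool,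
      f (Fin.cons b x) * g (Fin.cons c y) *
        Ker ρ (Fin.cons b x : Fin (n + 1) → Bool) (Fin.cons c y : Fin (n + 1) → Bool) =
      (1 + ρ * (sg b * sg c)) * ∑ x : Fin n → Bool, ∑ y : Fin n → Bool,
        f (Fin.cons b x) * g (Fin.cons c y) * Ker ρ x y := by
    intro b c
    rw [Finset.mul_sum]
    refine Finset.sum_congr rfl fun x _ => ?_
    rw [Finset.mul_sum]
    refine Finset.sum_congr rfl fun y _ => ?_
    rw [Ker_cons]; ring
  unfold BB
  rw [sum_cons]
  simp only [sum_cons, Finset.sum_add_distrib]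
  rw [e, e, e, e, pow_succ]
  simp only [sg]
  simp
  field_simp
  ring

theorem two_point_aux (p q : ℝ) (hp : 0 ≤ p) (hq : 0 ≤ q) :
    8 * (p ^ 6 + p ^ 3 * q ^ 3 + q ^ 6) ^ 2 ≤ 9 * (p ^ 4 + q ^ 4) ^ 3 := by
  have h : 9 * (p ^ 4 + q ^ 4) ^ 3 - 8 * (p ^ 6 + p ^ 3 * q ^ 3 + q ^ 6) ^ 2 =
      (p - q) ^ 4 * (p ^ 8 + 4 * p ^ 7 * q + 9 * p ^ 6 * q ^ 2 + 4 * p ^ 5 * q ^ 3 +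
        (p ^ 3 * q - p * q ^ 3) ^ 2 +
        4 * p ^ 3 * q ^ 5 + 9 * p ^ 2 * q ^ 6 + 4 * p * q ^ 7 + q ^ 8) := by ring
  have : 0 ≤ (p - q) ^ 4 * (p ^ 8 + 4 * p ^ 7 * q + 9 * p ^ 6 * q ^ 2 + 4 * p ^ 5 * q ^ 3 +
        (p ^ 3 * q - p * q ^ 3) ^ 2 +
        4 * p ^ 3 * q ^ 5 + 9 * p ^ 2 * q ^ 6 + 4 * p * q ^ 7 + q ^ 8) := by positivity
  linarith

theorem two_point (a p q : ℝ) (hp : 0 ≤ p) (hq : 0 ≤ q)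
    (h : a ^ 4 = (p ^ 4 + q ^ 4) / 2) : (p ^ 6 + p ^ 3 * q ^ 3 + q ^ 6) / 3 ≤ a ^ 6 := by
  apply le_of_sq_le_sq _ (by positivity)
  have e : (a ^ 6) ^ 2 = ((p ^ 4 + q ^ 4) / 2) ^ 3 := by rw [← h]; ring
  rw [e]
  nlinarith [two_point_aux p q hp hq]

theorem exists_fourth (t : ℝ) (ht : 0 ≤ t) : ∃ a, 0 ≤ a ∧ t = a ^ 4 :=
  ⟨√(√t), by positivity, by
    rw [show (4:ℕ) = 2 * 2 from rfl, pow_mul, Real.sq_sqrt (Real.sqrt_nonneg _), Real.sq_sqrt ht]⟩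

theorem hcExp_nonneg {n : ℕ} {f : (Fin n → Bool) → ℝ} (hf : ∀ x, 0 ≤ f x) : 0 ≤ hcExp n f :=
  div_nonneg (Finset.sum_nonneg fun x _ => hf x) (by positivity)

theorem hyper (n : ℕ) : ∀ (f g : (Fin n → Bool) → ℝ), (∀ x, 0 ≤ f x) → (∀ x, f x ≤ 1) →
    (∀ x, 0 ≤ g x) → (∀ x, g x ≤ 1) → ∀ a b : ℝ, 0 ≤ a → 0 ≤ b → hcExp n f = a ^ 4 →
    hcExp n g = b ^ 4 → BB n (1 / 3) f g ≤ a ^ 3 * b ^ 3 := by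
  induction n with
  | zero =>
    intro f g hf0 hf1 hg0 hg1 a b ha hb hfa hgb
    simp only [hcExp, Finset.univ_unique, Finset.sum_singleton, pow_zero, div_one] at hfa hgb
    simp only [BB, Finset.univ_unique, Finset.sum_singleton, pow_zero, div_one]
    have hK : ∀ x y : Fin 0 → Bool, Ker (1 / 3 : ℝ) x y = 1 := by intro x y; simp [Ker]
    rw [hfa, hgb, hK, mul_one]
    have h1 : a ≤ 1 := by
      have := hfa.symm.le.trans (hf1 _)
      by_contra hc; push Not at hc
      linarith [one_lt_pow₀ hc (n := 4) (by norm_num)]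
    have h2 : b ≤ 1 := by
      have := hgb.symm.le.trans (hg1 _)
      by_contra hc; push Not at hc
      linarith [one_lt_pow₀ hc (n := 4) (by norm_num)]
    have h3 : a ^ 4 ≤ a ^ 3 := pow_le_pow_of_le_one ha h1 (by norm_num)
    have h4 : b ^ 4 ≤ b ^ 3 := pow_le_pow_of_le_one hb h2 (by norm_num)
    exact mul_le_mul h3 h4 (by positivity) (by positivity)
  | succ n ih =>
    intro f g hf0 hf1 hg0 hg1 a b ha hb hfa hgb
    rw [hcExp_cons] at hfa hgb
    obtain ⟨a0, ha0, ea0⟩ := exists_fourth (hcExp n (fun x => f (Fin.cons false x)))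
      (hcExp_nonneg fun x => hf0 _)
    obtain ⟨a1, ha1, ea1⟩ := exists_fourth (hcExp n (fun x => f (Fin.cons true x)))
      (hcExp_nonneg fun x => hf0 _)
    obtain ⟨b0, hb0, eb0⟩ := exists_fourth (hcExp n (fun x => g (Fin.cons false x)))
      (hcExp_nonneg fun x => hg0 _)
    obtain ⟨b1, hb1, eb1⟩ := exists_fourth (hcExp n (fun x => g (Fin.cons true x)))
      (hcExp_nonneg fun x => hg0 _)
    rw [BB_cons]
    have i00 := ih _ _ (fun x => hf0 (Fin.cons false x)) (fun x => hf1 (Fin.cons false x))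
      (fun x => hg0 (Fin.cons false x)) (fun x => hg1 (Fin.cons false x)) a0 b0 ha0 hb0 ea0 eb0
    have i11 := ih _ _ (fun x => hf0 (Fin.cons true x)) (fun x => hf1 (Fin.cons true x))
      (fun x => hg0 (Fin.cons true x)) (fun x => hg1 (Fin.cons true x)) a1 b1 ha1 hb1 ea1 eb1
    have i01 := ih _ _ (fun x => hf0 (Fin.cons false x)) (fun x => hf1 (Fin.cons false x))
      (fun x => hg0 (Fin.cons true x)) (fun x => hg1 (Fin.cons true x)) a0 b1 ha0 hb1 ea0 eb1
    have i10 := ih _ _ (fun x => hf0 (Fin.cons true x)) (fun x => hf1 (Fin.cons true x))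
      (fun x => hg0 (Fin.cons false x)) (fun x => hg1 (Fin.cons false x)) a1 b0 ha1 hb0 ea1 eb0
    rw [ea0, ea1] at hfa
    rw [eb0, eb1] at hgb
    have ta := two_point a a0 a1 ha0 ha1 hfa.symm
    have tb := two_point b b0 b1 hb0 hb1 hgb.symm
    have hM : (2 * (a0 ^ 3 * b0 ^ 3 + a1 ^ 3 * b1 ^ 3) + (a0 ^ 3 * b1 ^ 3 + a1 ^ 3 * b0 ^ 3)) / 6 ≤
        a ^ 3 * b ^ 3 := by
      apply le_of_sq_le_sq _ (by positivity)
      have hmul := mul_le_mul ta tb (by positivity) (by positivity)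
      have e : (a ^ 3 * b ^ 3) ^ 2 = a ^ 6 * b ^ 6 := by ring
      rw [e]
      refine le_trans ?_ hmul
      nlinarith [sq_nonneg (a0 ^ 3 * b1 ^ 3 - a1 ^ 3 * b0 ^ 3)]
    linarith

theorem chi_mul {n : ℕ} (S : Finset (Fin n)) (x y : Fin n → Bool) (ρ : ℝ) :
    ∏ i ∈ S, (ρ * tt x y i) = ρ ^ S.card * (chi S x * chi S y) := by
  rw [Finset.prod_mul_distrib, Finset.prod_const]
  unfold tt chi
  rw [Finset.prod_mul_distrib]
  rfl

theorem BB_fourier {n : ℕ} (ρ : ℝ) (f : (Fin n → Bool) → ℝ) :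
    BB n ρ f f = ∑ S : Finset (Fin n), ρ ^ S.card * fcoef n f S ^ 2 := by
  have hK : ∀ x y : Fin n → Bool, Ker ρ x y =
      ∑ S : Finset (Fin n), ρ ^ S.card * (chi S x * chi S y) := by
    intro x y
    unfold Ker
    rw [Finset.prod_one_add, Finset.powerset_univ]
    exact Finset.sum_congr rfl fun S _ => chi_mul S x y ρ
  unfold BB fcoef hcExp
  have h4 : (4:ℝ) ^ n = 2 ^ n * 2 ^ n := by rw [← mul_pow]; norm_num
  have : ∀ S : Finset (Fin n), ρ ^ S.card * ((∑ x, f x * chi S x) / 2 ^ n) ^ 2 =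
      (∑ x, ∑ y, f x * f y * (ρ ^ S.card * (chi S x * chi S y))) / 4 ^ n := by
    intro S
    rw [div_pow, pow_two, Finset.sum_mul_sum, h4, ← pow_two, ← mul_div_assoc, Finset.mul_sum]
    congr 1
    refine Finset.sum_congr rfl fun x _ => ?_
    rw [Finset.mul_sum]
    refine Finset.sum_congr rfl fun y _ => ?_
    ring
  rw [Finset.sum_congr rfl (fun S _ => this S), ← Finset.sum_div]
  congr 1
  conv_rhs => rw [Finset.sum_comm]
  refine Finset.sum_congr rfl fun x _ => ?_
  conv_rhs => rw [Finset.sum_comm]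
  refine Finset.sum_congr rfl fun y _ => ?_
  rw [hK, Finset.mul_sum]

theorem Ker_one {n : ℕ} (x y : Fin n → Bool) : Ker 1 x y = if x = y then 2 ^ n else 0 := by
  split_ifs with h
  · subst h
    unfold Ker tt
    simp only [sg_mul_self]
    norm_num
  · obtain ⟨i, hi⟩ := Function.ne_iff.mp h
    unfold Ker
    apply Finset.prod_eq_zero (Finset.mem_univ i)
    unfold tt sg
    revert hi
    cases x i <;> cases y i <;> simp

theorem BB_one {n : ℕ} (f : (Fin n → Bool) → ℝ) : BB n 1 f f = hcExp n (fun x => f x * f x) := by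
  unfold BB hcExp
  have h4 : (4:ℝ) ^ n = 2 ^ n * 2 ^ n := by rw [← mul_pow]; norm_num
  simp only [Ker_one, mul_ite, mul_zero, Finset.sum_ite_eq, Finset.mem_univ, if_true]
  rw [← Finset.sum_mul, h4]
  field_simp

/-- interpolation + hypercontractivity -/
theorem BB_interp {n : ℕ} (f : (Fin n → Bool) → ℝ) (hf : ∀ x, f x * f x = f x) (a : ℝ) (ha : 0 < a)
    (hμ : hcExp n f = a ^ 4) (θ : ℝ) (h0 : 0 ≤ θ) (h1 : θ ≤ 1) :
    BB n ((1 / 3) ^ θ) f f ≤ a ^ 4 * (a ^ 2) ^ θ := by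
  have hf0 : ∀ x, 0 ≤ f x := fun x => by rw [← hf]; exact mul_self_nonneg _
  have hf1 : ∀ x, f x ≤ 1 := fun x => by nlinarith [hf x]
  have H3 := hyper n f f hf0 hf1 hf0 hf1 a a ha.le ha.le hμ hμ
  have H1 : BB n 1 f f = a ^ 4 := by rw [BB_one, ← hμ]; simp only [hf]
  rw [BB_fourier] at H3 H1 ⊢
  simp only [one_pow, one_mul] at H1
  have hl : 0 < (a ^ 2) ^ (1 - θ) := by positivity
  have key : ∀ S : Finset (Fin n), (a ^ 2) ^ (1 - θ) * (((1 / 3 : ℝ) ^ θ) ^ S.card * fcoef n f S ^ 2) ≤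
      ((1 - θ) * a ^ 2) * fcoef n f S ^ 2 + θ * ((1 / 3) ^ S.card * fcoef n f S ^ 2) := by
    intro S
    have e : ((1 / 3 : ℝ) ^ θ) ^ S.card = ((1 / 3 : ℝ) ^ S.card) ^ θ := by
      rw [← Real.rpow_natCast, ← Real.rpow_mul (by norm_num), mul_comm,
        Real.rpow_mul (by norm_num), Real.rpow_natCast]
    have := Real.geom_mean_le_arith_mean2_weighted (w₁ := 1 - θ) (w₂ := θ) (p₁ := a ^ 2)
      (p₂ := (1 / 3 : ℝ) ^ S.card) (by linarith) h0 (by positivity) (by positivity) (by ring)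
    rw [e]
    nlinarith [mul_le_mul_of_nonneg_right this (sq_nonneg (fcoef n f S))]
  have sumkey := Finset.sum_le_sum (fun S (_ : S ∈ (Finset.univ : Finset (Finset (Fin n)))) => key S)
  rw [← Finset.mul_sum, Finset.sum_add_distrib, ← Finset.mul_sum, ← Finset.mul_sum, H1] at sumkey
  have e2 : (a ^ 2) ^ (1 - θ) * (a ^ 4 * (a ^ 2) ^ θ) = a ^ 6 := by
    have : (a ^ 2) ^ (1 - θ) * (a ^ 2) ^ θ = a ^ 2 := by
      rw [← Real.rpow_add (by positivity)]; simp
    linear_combination a ^ 4 * this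
  refine le_of_mul_le_mul_left ?_ hl
  rw [e2]
  nlinarith [mul_le_mul_of_nonneg_left H3 h0]

theorem BB_deriv {n : ℕ} (ρ : ℝ) (f : (Fin n → Bool) → ℝ) :
    HasDerivAt (fun r => BB n r f f)
      ((∑ x, ∑ i, f x * sg (x i) * GG ρ f i x) / 2 ^ n) ρ := by
  have hK : ∀ x y : Fin n → Bool, HasDerivAt (fun r => Ker r x y)
      (∑ i, KerE ρ i x y * tt x y i) ρ := by
    intro x y
    have := HasDerivAt.fun_finsetProd (u := (Finset.univ : Finset (Fin n)))
      (f := fun i r => 1 + r * tt x y i) (f' := fun i => tt x y i) (x := ρ)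
      (fun i _ => by simpa using ((hasDerivAt_id ρ).mul_const (tt x y i)).const_add 1)
    simpa [Ker, KerE, smul_eq_mul] using this
  have h4 : (4:ℝ) ^ n = 2 ^ n * 2 ^ n := by rw [← mul_pow]; norm_num
  have := (HasDerivAt.fun_sum (u := (Finset.univ : Finset (Fin n → Bool))) (x := ρ)
    (fun x _ => HasDerivAt.fun_sum (u := (Finset.univ : Finset (Fin n → Bool)))
      (fun y _ => (hK x y).const_mul (f x * f y)))).div_const (4 ^ n)
  refine HasDerivAt.congr_deriv this ?_
  symm
  rw [h4, ← div_div]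
  congr 1
  rw [Finset.sum_div]
  refine Finset.sum_congr rfl fun x _ => ?_
  simp only [GG, Finset.mul_sum]
  rw [Finset.sum_comm, Finset.sum_div]
  refine Finset.sum_congr rfl fun i _ => ?_
  rw [← mul_div_assoc, Finset.mul_sum]
  congr 1
  refine Finset.sum_congr rfl fun y _ => ?_
  unfold tt; ring

/-! ### The colored gradient -/

def vr {n : ℕ} (f : (Fin n → Bool) → Bool) (col : (Fin n → Bool) → Fin n → Bool)
    (i : Fin n) (x : Fin n → Bool) : ℝ :=
  if f x = true ∧ f (hcFlip x i) ≠ f x ∧ col x i = true then sg (x i) else 0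

def vb {n : ℕ} (f : (Fin n → Bool) → Bool) (col : (Fin n → Bool) → Fin n → Bool)
    (i : Fin n) (x : Fin n → Bool) : ℝ :=
  if f x = false ∧ f (hcFlip x i) ≠ f x ∧ col x i = false then sg (x i) else 0

theorem flip_identity {n : ℕ} (f : (Fin n → Bool) → Bool) (col : (Fin n → Bool) → Fin n → Bool)
    (hc : colSymm col) (i : Fin n) (h : (Fin n → Bool) → ℝ) (hh : ∀ x, h (hcFlip x i) = h x) :
    ∑ x, toReal f x * sg (x i) * h x = ∑ x, (vr f col i x - vb f col i x) * h x := by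
  rw [← sub_eq_zero, ← Finset.sum_sub_distrib]
  apply sum_eq_zero_of_flip i
  intro x
  simp only [hh, toReal, vr, vb, hcFlip_flip, hcFlip_same, sg_not, hc x i]
  cases f x <;> cases f (hcFlip x i) <;> cases col x i <;> simp

theorem sum_vr {n : ℕ} (f : (Fin n → Bool) → Bool) (col : (Fin n → Bool) → Fin n → Bool)
    (x : Fin n → Bool) : ∑ i, vr f col i x ^ 2 = sRed f col x := by
  have : ∀ i, vr f col i x ^ 2 =
      if f x = true ∧ f (hcFlip x i) ≠ f x ∧ col x i = true then 1 else 0 := by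
    intro i
    unfold vr
    split_ifs
    · rw [pow_two, sg_mul_self]
    · simp
  rw [Finset.sum_congr rfl (fun i _ => this i), Finset.sum_boole]
  unfold sRed
  cases f x <;> simp

theorem sum_vb {n : ℕ} (f : (Fin n → Bool) → Bool) (col : (Fin n → Bool) → Fin n → Bool)
    (x : Fin n → Bool) : ∑ i, vb f col i x ^ 2 = sBlue f col x := by
  have : ∀ i, vb f col i x ^ 2 =
      if f x = false ∧ f (hcFlip x i) ≠ f x ∧ col x i = false then 1 else 0 := by
    intro i
    unfold vb
    split_ifs
    · rw [pow_two, sg_mul_self]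
    · simp
  rw [Finset.sum_congr rfl (fun i _ => this i), Finset.sum_boole]
  unfold sBlue
  cases f x <;> simp

theorem deriv_bound {n : ℕ} (f : (Fin n → Bool) → Bool) (col : (Fin n → Bool) → Fin n → Bool)
    (hc : colSymm col) {ρ : ℝ} (h0 : 0 ≤ ρ) (h1 : ρ < 1) :
    (∑ x, ∑ i, toReal f x * sg (x i) * GG ρ (toReal f) i x) / 2 ^ n ≤
      talagrandCol f col / √(1 - ρ) := by
  have e : ∑ x, ∑ i, toReal f x * sg (x i) * GG ρ (toReal f) i x =
      ∑ x, ∑ i, (vr f col i x - vb f col i x) * GG ρ (toReal f) i x := by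
    rw [Finset.sum_comm]
    conv_rhs => rw [Finset.sum_comm]
    refine Finset.sum_congr rfl fun i _ => ?_
    exact flip_identity f col hc i _ (fun x => GG_flip ρ _ i x)
  have e2 : talagrandCol f col / √(1 - ρ) =
      (∑ x, (√(sRed f col x) + √(sBlue f col x)) * (1 / √(1 - ρ))) / 2 ^ n := by
    unfold talagrandCol hcExp
    rw [← Finset.sum_mul, Finset.sum_add_distrib]
    ring
  rw [e, e2]
  gcongr with x _
  have hpos : 0 < 1 - ρ := by linarith
  have hG : √(∑ i, GG ρ (toReal f) i x ^ 2) ≤ 1 / √(1 - ρ) := by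
    rw [← Real.sqrt_one, ← Real.sqrt_div (by norm_num)]
    apply Real.sqrt_le_sqrt
    rw [Real.sqrt_one, le_div_iff₀ hpos]
    have hb := GG_bound h0 h1 (toReal f) (fun x => by unfold toReal; split_ifs <;> norm_num) x
    have hs : 0 ≤ ∑ i, GG ρ (toReal f) i x ^ 2 := Finset.sum_nonneg fun i _ => sq_nonneg _
    nlinarith [mul_nonneg hs (mul_nonneg h0 hpos.le)]
  have c1 := Real.sum_mul_le_sqrt_mul_sqrt Finset.univ (fun i => vr f col i x)
    (fun i => GG ρ (toReal f) i x)
  have c2 := Real.sum_mul_le_sqrt_mul_sqrt Finset.univ (fun i => - vb f col i x)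
    (fun i => GG ρ (toReal f) i x)
  simp only [neg_sq] at c2
  rw [sum_vr] at c1
  rw [sum_vb] at c2
  calc ∑ i, (vr f col i x - vb f col i x) * GG ρ (toReal f) i x
      = ∑ i, vr f col i x * GG ρ (toReal f) i x + ∑ i, - vb f col i x * GG ρ (toReal f) i x := by
        rw [← Finset.sum_add_distrib]
        refine Finset.sum_congr rfl fun i _ => ?_
        ring
    _ ≤ (√(sRed f col x) + √(sBlue f col x)) * √(∑ i, GG ρ (toReal f) i x ^ 2) := by linarith
    _ ≤ _ := by gcongr

theorem stab_bound {n : ℕ} (f : (Fin n → Bool) → Bool) (col : (Fin n → Bool) → Fin n → Bool)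
    (hc : colSymm col) {ρ : ℝ} (h0 : 0 ≤ ρ) (h1 : ρ ≤ 1) :
    hcExp n (toReal f) ≤ BB n ρ (toReal f) (toReal f) + 2 * talagrandCol f col * √(1 - ρ) := by
  set T := talagrandCol f col with hT
  have hd : ∀ r ∈ Set.Ioo (0:ℝ) 1, HasDerivAt
      (fun r => BB n r (toReal f) (toReal f) + 2 * T * √(1 - r))
      ((∑ x, ∑ i, toReal f x * sg (x i) * GG r (toReal f) i x) / 2 ^ n
        + 2 * T * (-1 / (2 * √(1 - r)))) r := by
    intro r hr
    have hp : 1 - r ≠ 0 := by have := hr.2; linarith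
    exact (BB_deriv r (toReal f)).add
      ((((hasDerivAt_id r).const_sub 1).sqrt hp).const_mul (2 * T))
  have hcont : ContinuousOn (fun r => BB n r (toReal f) (toReal f) + 2 * T * √(1 - r))
      (Set.Icc 0 1) := by
    apply Continuous.continuousOn
    apply Continuous.add
    · exact continuous_iff_continuousAt.mpr fun r => (BB_deriv r (toReal f)).continuousAt
    · fun_prop
  have hanti : AntitoneOn (fun r => BB n r (toReal f) (toReal f) + 2 * T * √(1 - r))
      (Set.Icc 0 1) := by
    apply antitoneOn_of_deriv_nonpos (convex_Icc 0 1) hcont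
    · rw [interior_Icc]
      intro r hr
      exact (hd r hr).differentiableAt.differentiableWithinAt
    · rw [interior_Icc]
      intro r hr
      rw [(hd r hr).deriv]
      have hb := deriv_bound f col hc hr.1.le hr.2
      have hs : 0 < √(1 - r) := Real.sqrt_pos.mpr (by have := hr.2; linarith)
      have : 2 * T * (-1 / (2 * √(1 - r))) = - (T / √(1 - r)) := by field_simp
      rw [this]
      linarith
  have := hanti ⟨h0, h1⟩ ⟨zero_le_one, le_refl _⟩ h1
  simp only [sub_self, Real.sqrt_zero, mul_zero, add_zero, BB_one] at this
  have e : (fun x => toReal f x * toReal f x) = toReal f := by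
    funext x; unfold toReal; split_ifs <;> norm_num
  rw [e] at this
  exact this

theorem tal_nonneg {n : ℕ} (f : (Fin n → Bool) → Bool) (col : (Fin n → Bool) → Fin n → Bool) :
    0 ≤ talagrandCol f col :=
  add_nonneg (hcExp_nonneg fun _ => Real.sqrt_nonneg _) (hcExp_nonneg fun _ => Real.sqrt_nonneg _)

theorem half_case {n : ℕ} (f : (Fin n → Bool) → Bool) (col : (Fin n → Bool) → Fin n → Bool)
    (hc : colSymm col) (hpos : 0 < hcExp n (toReal f)) (hhalf : hcExp n (toReal f) ≤ 1 / 2) :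
    hcExp n (toReal f) * √(Real.log (1 / hcExp n (toReal f))) ≤ 8 * talagrandCol f col := by
  set μ := hcExp n (toReal f) with hμ
  set T := talagrandCol f col with hT
  have hTn : 0 ≤ T := tal_nonneg f col
  obtain ⟨a, ha, ea⟩ := exists_fourth μ hpos.le
  have ha' : 0 < a := by
    rcases ha.eq_or_lt with h | h
    · rw [ea, ← h] at hpos; norm_num at hpos
    · exact h
  set L := Real.log (1 / μ) with hL
  have hl2 : 0 < Real.log 2 := Real.log_pos (by norm_num)
  have hL2 : Real.log 2 ≤ L := by
    apply Real.log_le_log (by norm_num)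
    rw [le_div_iff₀ hpos]; linarith
  have hLpos : 0 < L := by linarith
  set θ := Real.log 2 / L with hθ
  have hθ0 : 0 ≤ θ := by positivity
  have hθ1 : θ ≤ 1 := by rw [hθ, div_le_one hLpos]; exact hL2
  have hr0 : (0:ℝ) ≤ (1 / 3 : ℝ) ^ θ := by positivity
  have hr1 : (1 / 3 : ℝ) ^ θ ≤ 1 := Real.rpow_le_one (by norm_num) (by norm_num) hθ0
  have hint := BB_interp (toReal f) (fun x => by unfold toReal; split_ifs <;> norm_num) a ha' ea
    θ hθ0 hθ1
  have hst := stab_bound f col hc hr0 hr1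
  rw [← hμ, ← hT] at hst
  rw [← ea] at hint
  have hsq : ((a ^ 2) ^ θ) ^ 2 = 1 / 2 := by
    have e1 : ((a ^ 2) ^ θ) ^ 2 = μ ^ θ := by
      rw [← Real.rpow_natCast ((a ^ 2) ^ θ) 2, ← Real.rpow_mul (by positivity), mul_comm,
        Real.rpow_mul (by positivity), Real.rpow_natCast, ea]
      congr 1; ring
    rw [e1, Real.rpow_def_of_pos hpos]
    have : Real.log μ * θ = - Real.log 2 := by
      have : Real.log μ = - L := by rw [hL, one_div, Real.log_inv, neg_neg]
      rw [this, hθ]; field_simp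
    rw [this, Real.exp_neg, Real.exp_log (by norm_num)]; norm_num
  have hle : (a ^ 2) ^ θ ≤ 3 / 4 := by
    have : 0 ≤ (a ^ 2) ^ θ := by positivity
    nlinarith
  have hlog3 : Real.log 3 ≤ 1.2 := by
    rw [Real.log_le_iff_le_exp (by norm_num)]
    have := Real.quadratic_le_exp_of_nonneg (x := 1.2) (by norm_num)
    have h6 : Real.exp 1.2 = Real.exp 0.6 * Real.exp 0.6 := by rw [← Real.exp_add]; norm_num
    have h7 := Real.quadratic_le_exp_of_nonneg (x := 0.6) (by norm_num)
    nlinarith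
  have hl2' : Real.log 2 ≤ 0.7 := by linarith [Real.log_two_lt_d9]
  have h1r : (1 - (1 / 3 : ℝ) ^ θ) ≤ 1 / L := by
    have : (1 / 3 : ℝ) ^ θ = Real.exp (- (Real.log 3 * θ)) := by
      rw [Real.rpow_def_of_pos (by norm_num), one_div, Real.log_inv]; congr 1; ring
    rw [this]
    have h := Real.add_one_le_exp (- (Real.log 3 * θ))
    have h2 : Real.log 3 * θ ≤ 1 / L := by
      rw [hθ, ← mul_div_assoc]
      gcongr
      have : Real.log 3 * Real.log 2 ≤ 1.2 * 0.7 := by gcongr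
      linarith
    linarith
  have hsL : 0 < √L := Real.sqrt_pos.mpr hLpos
  have hsq1 : √(1 - (1 / 3 : ℝ) ^ θ) ≤ 1 / √L := by
    refine (Real.sqrt_le_sqrt h1r).trans ?_
    rw [Real.sqrt_div (by norm_num), Real.sqrt_one]
  have f1 : μ ≤ μ * (3 / 4) + 2 * T * (1 / √L) := by
    calc μ ≤ _ := hst
      _ ≤ μ * (a ^ 2) ^ θ + 2 * T * √(1 - (1 / 3 : ℝ) ^ θ) := by linarith
      _ ≤ _ := by gcongr
  have f2 := mul_le_mul_of_nonneg_right f1 hsL.le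
  have : (μ * (3 / 4) + 2 * T * (1 / √L)) * √L = μ * √L * (3 / 4) + 2 * T := by
    field_simp
  rw [this] at f2
  linarith

theorem half_case_var {n : ℕ} (f : (Fin n → Bool) → Bool) (col : (Fin n → Bool) → Fin n → Bool)
    (hc : colSymm col) (hv : 0 < hcVar n f) (hhalf : hcExp n (toReal f) ≤ 1 / 2) :
    1 / 16 * hcVar n f * √(Real.log (1 / hcVar n f)) ≤ talagrandCol f col := by
  have h0 : 0 ≤ hcExp n (toReal f) :=
    hcExp_nonneg fun x => by unfold toReal; split_ifs <;> norm_num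
  unfold hcVar at hv ⊢
  have hpos : 0 < hcExp n (toReal f) := by nlinarith
  have H := half_case f col hc hpos hhalf
  set μ := hcExp n (toReal f)
  set v := μ - μ ^ 2 with hvd
  have hvle : v ≤ μ := by nlinarith
  have hlog : Real.log (1 / v) ≤ 2 ^ 2 * Real.log (1 / μ) := by
    have h2 : Real.log (1 / v) ≤ Real.log ((1 / μ) ^ 2) := by
      apply Real.log_le_log (by positivity)
      rw [div_pow, one_pow]
      apply one_div_le_one_div_of_le (by positivity)
      nlinarith
    rw [Real.log_pow] at h2
    have h3 : 0 ≤ Real.log (1 / μ) := Real.log_nonneg (by rw [le_div_iff₀ hpos]; linarith)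
    push_cast at h2
    linarith
  have hs : √(Real.log (1 / v)) ≤ 2 * √(Real.log (1 / μ)) := by
    refine (Real.sqrt_le_sqrt hlog).trans ?_
    rw [Real.sqrt_mul (by norm_num), Real.sqrt_sq (by norm_num)]
  calc 1 / 16 * v * √(Real.log (1 / v)) ≤ 1 / 16 * μ * (2 * √(Real.log (1 / μ))) := by gcongr
    _ ≤ _ := by linarith

theorem hcExp_compl {n : ℕ} (f : (Fin n → Bool) → Bool) :
    hcExp n (toReal fun x => !(f x)) = 1 - hcExp n (toReal f) := by
  have : ∀ x, toReal (fun x => !(f x)) x = 1 - toReal f x := by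
    intro x; unfold toReal; cases h : f x <;> simp [h]
  unfold hcExp
  rw [Finset.sum_congr rfl (fun x _ => this x), Finset.sum_sub_distrib, sub_div]
  congr 1
  simp

theorem tal_compl {n : ℕ} (f : (Fin n → Bool) → Bool) (col : (Fin n → Bool) → Fin n → Bool) :
    talagrandCol (fun x => !(f x)) (fun x i => !(col x i)) = talagrandCol f col := by
  have h1 : sRed (fun x => !(f x)) (fun x i => !(col x i)) = sBlue f col := by
    funext x; unfold sRed sBlue; cases h : f x <;> simp [h]
  have h2 : sBlue (fun x => !(f x)) (fun x i => !(col x i)) = sRed f col := by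
    funext x; unfold sRed sBlue; cases h : f x <;> simp [h]
  unfold talagrandCol
  rw [h1, h2, add_comm]

theorem robust_talagrand_isoperimetry :
    ∃ c : ℝ, 0 < c ∧ ∀ (n : ℕ) (f : (Fin n → Bool) → Bool), 0 < hcVar n f →
      ∀ col : (Fin n → Bool) → Fin n → Bool, colSymm col →
        talagrandCol f col ≥ c * hcVar n f * Real.sqrt (Real.log (1 / hcVar n f)) := by
  refine ⟨1 / 16, by norm_num, fun n f hv col hc => ?_⟩
  rcases le_total (hcExp n (toReal f)) (1 / 2) with h | h
  · exact half_case_var f col hc hv h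
  · have hE := hcExp_compl f
    have hV : hcVar n (fun x => !(f x)) = hcVar n f := by
      unfold hcVar; rw [hE]; ring
    have := half_case_var (fun x => !(f x)) (fun x i => !(col x i))
      (fun x i => by simp only [hc x i]) (by rw [hV]; exact hv) (by rw [hE]; linarith)
    rw [hV, tal_compl] at this
    exact this

end
end

section
/- Let f : {0,1}^n → {0,1} and let d ∈ ℕ. Then Σ_{S ⊆ [n], |S| ≤ d} f̂(S)² ≤ 2^d · E[f]^{5/4}. -/
open Finset

noncomputable section

theorem hcFlip_invol {n : ℕ} (i : Fin n) :
    Function.Involutive (fun x : Fin n → Bool => hcFlip x i) := by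
  intro x
  simp [hcFlip]

theorem sum_hcFlip {n : ℕ} (i : Fin n) (h : (Fin n → Bool) → ℝ) :
    ∑ x, h (hcFlip x i) = ∑ x, h x :=
  Equiv.sum_comp (hcFlip_invol i).toPerm h

theorem chi_hcFlip {n : ℕ} (i : Fin n) (S : Finset (Fin n)) (hi : i ∉ S)
    (x : Fin n → Bool) : chi S (hcFlip x i) = chi S x := by
  unfold chi
  refine Finset.prod_congr rfl fun j hj => ?_
  have : j ≠ i := fun h => hi (h ▸ hj)
  simp [hcFlip, this]

/-- polynomial with coefficients `a` on the subsets of `T` -/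
def polyOn {n : ℕ} (a : Finset (Fin n) → ℝ) (T : Finset (Fin n)) (x : Fin n → Bool) : ℝ :=
  ∑ S ∈ T.powerset, a S * chi S x

theorem polyOn_hcFlip {n : ℕ} (a : Finset (Fin n) → ℝ) (T : Finset (Fin n)) (i : Fin n)
    (hi : i ∉ T) (x : Fin n → Bool) : polyOn a T (hcFlip x i) = polyOn a T x := by
  unfold polyOn
  refine Finset.sum_congr rfl fun S hS => ?_
  rw [chi_hcFlip i S (fun h => hi (Finset.mem_powerset.1 hS h))]

theorem polyOn_insert {n : ℕ} (a : Finset (Fin n) → ℝ) (T : Finset (Fin n)) (i : Fin n)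
    (hi : i ∉ T) (x : Fin n → Bool) :
    polyOn a (insert i T) x = polyOn a T x
      + (if x i then (-1 : ℝ) else 1) * polyOn (fun S => a (insert i S)) T x := by
  unfold polyOn
  rw [Finset.sum_powerset_insert hi, Finset.mul_sum]
  congr 1
  refine Finset.sum_congr rfl fun S hS => ?_
  have : i ∉ S := fun h => hi (Finset.mem_powerset.1 hS h)
  unfold chi
  rw [Finset.prod_insert this]
  ring

theorem polyOn_insert_flip {n : ℕ} (a : Finset (Fin n) → ℝ) (T : Finset (Fin n)) (i : Fin n)
    (hi : i ∉ T) (x : Fin n → Bool) :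
    polyOn a (insert i T) (hcFlip x i) = polyOn a T x
      - (if x i then (-1 : ℝ) else 1) * polyOn (fun S => a (insert i S)) T x := by
  rw [polyOn_insert a T i hi, polyOn_hcFlip _ T i hi, polyOn_hcFlip _ T i hi]
  cases h : x i <;> simp [hcFlip, h] <;> ring

theorem sum_polyOn_sq {n : ℕ} (T : Finset (Fin n)) : ∀ a : Finset (Fin n) → ℝ,
    ∑ x, polyOn a T x ^ 2 = 2 ^ n * ∑ S ∈ T.powerset, a S ^ 2 := by
  induction T using Finset.induction_on with
  | empty => intro a; simp [polyOn, chi]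
  | insert i T hi ih =>
    intro a
    have h1 := sum_hcFlip i (fun x => polyOn a (insert i T) x ^ 2)
    have h2 : ∑ x, polyOn a (insert i T) (hcFlip x i) ^ 2 + ∑ x, polyOn a (insert i T) x ^ 2
        = 2 * (∑ x, polyOn a T x ^ 2 + ∑ x, polyOn (fun S => a (insert i S)) T x ^ 2) := by
      rw [← Finset.sum_add_distrib, ← Finset.sum_add_distrib, Finset.mul_sum]
      refine Finset.sum_congr rfl fun x _ => ?_
      rw [polyOn_insert_flip a T i hi, polyOn_insert a T i hi]
      split_ifs <;> ring
    rw [ih, ih] at h2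
    rw [Finset.sum_powerset_insert hi]
    linarith

theorem sum_polyOn_four {n : ℕ} (T : Finset (Fin n)) : ∀ a : Finset (Fin n) → ℝ,
    ∑ x, polyOn a T x ^ 4 ≤ 2 ^ n * (∑ S ∈ T.powerset, 3 ^ S.card * a S ^ 2) ^ 2 := by
  induction T using Finset.induction_on with
  | empty => intro a; simp [polyOn, chi]; apply le_of_eq; ring
  | insert i T hi ih =>
    intro a
    have h1 := sum_hcFlip i (fun x => polyOn a (insert i T) x ^ 4)
    set b : Finset (Fin n) → ℝ := fun S => a (insert i S) with hb
    have h2 : ∑ x, polyOn a (insert i T) (hcFlip x i) ^ 4 + ∑ x, polyOn a (insert i T) x ^ 4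
        = 2 * (∑ x, polyOn a T x ^ 4 + 6 * ∑ x, polyOn a T x ^ 2 * polyOn b T x ^ 2
          + ∑ x, polyOn b T x ^ 4) := by
      rw [Finset.mul_sum, ← Finset.sum_add_distrib, ← Finset.sum_add_distrib,
        ← Finset.sum_add_distrib, Finset.mul_sum]
      refine Finset.sum_congr rfl fun x _ => ?_
      rw [polyOn_insert_flip a T i hi, polyOn_insert a T i hi]
      split_ifs <;> ring
    have h3 := Finset.sum_mul_sq_le_sq_mul_sq Finset.univ
      (fun x => polyOn a T x ^ 2) (fun x => polyOn b T x ^ 2)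
    simp only [← pow_mul] at h3
    norm_num at h3
    have ha := ih a
    have hb' := ih b
    rw [Finset.sum_powerset_insert hi]
    have h4 : ∑ S ∈ T.powerset, 3 ^ (insert i S).card * a (insert i S) ^ 2
        = 3 * ∑ S ∈ T.powerset, 3 ^ S.card * b S ^ 2 := by
      rw [Finset.mul_sum]
      refine Finset.sum_congr rfl fun S hS => ?_
      rw [Finset.card_insert_of_notMem (fun h => hi (Finset.mem_powerset.1 hS h))]
      simp only [hb]; ring
    rw [h4]
    have hU : 0 ≤ ∑ S ∈ T.powerset, 3 ^ S.card * a S ^ 2 :=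
      Finset.sum_nonneg fun S _ => by positivity
    have hV : 0 ≤ ∑ S ∈ T.powerset, 3 ^ S.card * b S ^ 2 :=
      Finset.sum_nonneg fun S _ => by positivity
    generalize (∑ S ∈ T.powerset, (3:ℝ) ^ S.card * a S ^ 2) = U at *
    generalize (∑ S ∈ T.powerset, (3:ℝ) ^ S.card * b S ^ 2) = V at *
    have hN : (0:ℝ) < 2 ^ n := by positivity
    have h5 : ∑ x, polyOn a T x ^ 2 * polyOn b T x ^ 2 ≤ 2 ^ n * (U * V) := by
      refine le_of_sq_le_sq ?_ (by positivity)
      refine h3.trans ((mul_le_mul ha hb' (Finset.sum_nonneg fun x _ => by positivity)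
        (by positivity)).trans (le_of_eq (by ring)))
    have h6 : 0 ≤ 2 ^ n * V ^ 2 := by positivity
    nlinarith

theorem low_degree_weight_bound (n : ℕ) (f : (Fin n → Bool) → Bool) (d : ℕ) :
    (∑ S ∈ Finset.univ.filter (fun S : Finset (Fin n) => S.card ≤ d),
        (fcoef n (toReal f) S) ^ 2) ≤
      2 ^ d * (hcExp n (toReal f)) ^ ((5 : ℝ) / 4) := by
  set W := ∑ S ∈ Finset.univ.filter (fun S : Finset (Fin n) => S.card ≤ d),
        (fcoef n (toReal f) S) ^ 2 with hW
  set μ := hcExp n (toReal f) with hμ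
  set F := toReal f with hF
  let a : Finset (Fin n) → ℝ := fun S => if S.card ≤ d then fcoef n F S else 0
  let g := polyOn a Finset.univ
  have hN : (0:ℝ) < 2 ^ n := by positivity
  have hF2 : ∀ x, F x ^ 2 = F x := fun x => by simp only [hF, toReal]; split_ifs <;> simp
  have hF0 : ∀ x, 0 ≤ F x := fun x => by rw [← hF2]; positivity
  have hsF : ∑ x, F x = 2 ^ n * μ := by
    rw [hμ, hcExp]; field_simp
  have hμ0 : 0 ≤ μ := div_nonneg (Finset.sum_nonneg fun x _ => hF0 x) hN.le
  have hW0 : 0 ≤ W := Finset.sum_nonneg fun S _ => by positivity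
  have hWa : ∑ S ∈ (Finset.univ : Finset (Fin n)).powerset, a S ^ 2 = W := by
    rw [hW, Finset.sum_filter, Finset.powerset_univ]
    refine Finset.sum_congr rfl fun S _ => ?_
    simp only [a]; split_ifs <;> simp
  have hg2 : ∑ x, g x ^ 2 = 2 ^ n * W := by
    rw [← hWa]; exact sum_polyOn_sq _ a
  have hg4 : ∑ x, g x ^ 4 ≤ 2 ^ n * (3 ^ d * W) ^ 2 := by
    refine (sum_polyOn_four _ a).trans ?_
    rw [← hWa, Finset.mul_sum]
    have : ∀ S : Finset (Fin n), (3:ℝ) ^ S.card * a S ^ 2 ≤ 3 ^ d * a S ^ 2 := by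
      intro S
      by_cases h : S.card ≤ d
      · gcongr; norm_num
      · simp [a, h]
    have h0 : 0 ≤ ∑ S ∈ (Finset.univ : Finset (Fin n)).powerset, (3:ℝ) ^ S.card * a S ^ 2 :=
      Finset.sum_nonneg fun S _ => by positivity
    exact mul_le_mul_of_nonneg_left (pow_le_pow_left₀ h0 (Finset.sum_le_sum fun S _ => this S) 2) hN.le
  have hFg : ∑ x, F x * g x = 2 ^ n * W := by
    simp only [g, polyOn, Finset.mul_sum]
    rw [Finset.sum_comm, ← hWa, Finset.mul_sum]
    refine Finset.sum_congr rfl fun S _ => ?_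
    have h : ∑ x, F x * chi S x = 2 ^ n * fcoef n F S := by
      rw [fcoef, hcExp]; field_simp
    have h' : ∑ x, F x * (a S * chi S x) = a S * ∑ x, F x * chi S x := by
      rw [Finset.mul_sum]; exact Finset.sum_congr rfl fun x _ => by ring
    rw [h', h]
    simp only [a]; split_ifs <;> ring
  -- Bessel
  have hWμ : W ≤ μ := by
    have h : 0 ≤ ∑ x, (F x - g x) ^ 2 := Finset.sum_nonneg fun x _ => sq_nonneg _
    have h' : ∑ x, (F x - g x) ^ 2 = ∑ x, F x - 2 * ∑ x, F x * g x + ∑ x, g x ^ 2 := by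
      rw [Finset.mul_sum, ← Finset.sum_sub_distrib, ← Finset.sum_add_distrib]
      refine Finset.sum_congr rfl fun x _ => ?_
      linear_combination hF2 x
    rw [h', hsF, hFg, hg2] at h
    refine le_of_mul_le_mul_left ?_ hN
    linarith
  -- two applications of Cauchy-Schwarz
  have c1 : (2 ^ n * W) ^ 2 ≤ (2 ^ n * μ) * ∑ x, F x * g x ^ 2 := by
    have h := Finset.sum_mul_sq_le_sq_mul_sq Finset.univ F (fun x => F x * g x)
    have e1 : ∑ x, F x * (F x * g x) = 2 ^ n * W := by
      rw [← hFg]; exact Finset.sum_congr rfl fun x _ => by rw [← mul_assoc, ← sq, hF2]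
    have e2 : ∑ x, (F x * g x) ^ 2 = ∑ x, F x * g x ^ 2 :=
      Finset.sum_congr rfl fun x _ => by rw [mul_pow, hF2]
    rw [e1, e2] at h
    simpa only [hF2, hsF] using h
  have c2 : (∑ x, F x * g x ^ 2) ^ 2 ≤ (2 ^ n * μ) * (2 ^ n * (3 ^ d * W) ^ 2) := by
    have h := Finset.sum_mul_sq_le_sq_mul_sq Finset.univ F (fun x => g x ^ 2)
    simp only [hF2, hsF, ← pow_mul] at h
    exact h.trans (by gcongr)
  have c3 : W ^ 4 ≤ 9 ^ d * μ ^ 3 * W ^ 2 := by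
    have h : ((2 ^ n * W) ^ 2) ^ 2 ≤ ((2 ^ n * μ) * ∑ x, F x * g x ^ 2) ^ 2 := by gcongr
    rw [mul_pow (2 ^ n * μ)] at h
    have h2 := h.trans (mul_le_mul_of_nonneg_left c2 (by positivity))
    refine le_of_mul_le_mul_left ?_ (pow_pos hN 4)
    have h9 : (9:ℝ) ^ d = (3 ^ d) ^ 2 := by rw [← pow_mul, mul_comm, pow_mul]; norm_num
    rw [h9]
    linarith
  have c4 : W ^ 4 ≤ 16 ^ d * μ ^ 5 := by
    calc W ^ 4 ≤ 9 ^ d * μ ^ 3 * W ^ 2 := c3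
      _ ≤ 16 ^ d * μ ^ 3 * μ ^ 2 := by gcongr; norm_num
      _ = _ := by ring
  refine le_of_pow_le_pow_left₀ (n := 4) (by norm_num) (by positivity) ?_
  refine c4.trans (le_of_eq ?_)
  rw [mul_pow, ← Real.rpow_natCast (μ ^ ((5:ℝ)/4)) 4, ← Real.rpow_mul hμ0, ← pow_mul, mul_comm d,
    pow_mul]
  norm_num

end
end
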